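/- Let (a,B_a) be a NIS-Lie superalgebra over a field K of characteristic 2 with B_a odd, and let (g,B_g) and (g̃,B_{g̃}) be D_ev-extensions of (a,B_a) by even derivations D and D̃ respectively, with g = Kx ⊕ a ⊕ Ke and g̃ = Kx̃ ⊕ a ⊕ Kẽ. Suppose π_0 is an isometry of (a,B_a), λ ∈ K is nonzero, and t ∈ a_0 satisfy π_0^{-1}∘D̃∘π_0 = λD + ad_t on a. Then the map π : g → g̃ defined by π(u) = π_0(u) + B_a(t,u)x̃ for u ∈ a, π(x) = λx̃, and π(e) = λ^{-1}(ẽ + π_0(t)), is an adapted isometry. -/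

import Mathlib

/-!
Common definitions: Lie superalgebras in characteristic 2 (encoded by their even
part `g0`, odd part `g1`, bracket components and squaring), NIS forms (even and odd),
homogeneous derivations, isometries, ideals, irreducibility, and the structure
formulas of the various double extensions.
-/

namespace Char2DoubleExt

section Defs

variable (K : Type) [Field K]
variable (g0 g1 h0 h1 : Type)
variable [AddCommGroup g0] [Module K g0] [AddCommGroup g1] [Module K g1]
variable [AddCommGroup h0] [Module K h0] [AddCommGroup h1] [Module K h1]

/-- A Lie superalgebra over a field of characteristic 2: `g0` is the even part,
`g1` the odd part, `br0` the bracket on `g0`, `br1` the action of `g0` on `g1`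
(the mixed bracket, extended symmetrically), `br11` the bracket of two odd
elements, and `sq` the squaring, whose polarization is `br11`. -/
structure SuperAlg : Type where
  br0 : g0 →ₗ[K] g0 →ₗ[K] g0
  br1 : g0 →ₗ[K] g1 →ₗ[K] g1
  br11 : g1 →ₗ[K] g1 →ₗ[K] g0
  sq : g1 → g0
  sq_smul : ∀ (c : K) (f : g1), sq (c • f) = (c * c) • sq f
  sq_add : ∀ f g : g1, sq (f + g) = sq f + sq g + br11 f g
  br0_self : ∀ x : g0, br0 x x = 0
  br11_comm : ∀ f g : g1, br11 f g = br11 g f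
  jacobi0 : ∀ x y z : g0, br0 x (br0 y z) + br0 y (br0 z x) + br0 z (br0 x y) = 0
  act_br : ∀ (x y : g0) (f : g1), br1 (br0 x y) f = br1 x (br1 y f) + br1 y (br1 x f)
  jacobi_mix : ∀ (x : g0) (f g : g1),
    br0 x (br11 f g) + br11 f (br1 x g) + br11 g (br1 x f) = 0
  sq_br0 : ∀ (f : g1) (x : g0), br0 (sq f) x = br11 f (br1 x f)
  sq_br1 : ∀ f g : g1, br1 (sq f) g = br1 (br11 f g) f

/-- A non-degenerate invariant supersymmetric *even* bilinear form on a Lie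
superalgebra in characteristic 2: it pairs `g0` with `g0` (component `B0`) and
`g1` with `g1` (component `B1`); mixed pairings vanish by evenness. -/
structure EvenNIS (S : SuperAlg K g0 g1) : Type where
  B0 : g0 →ₗ[K] g0 →ₗ[K] K
  B1 : g1 →ₗ[K] g1 →ₗ[K] K
  symm0 : ∀ x y, B0 x y = B0 y x
  symm1 : ∀ f g, B1 f g = B1 g f
  alt1 : ∀ f, B1 f f = 0
  nondeg0 : ∀ x, (∀ y, B0 x y = 0) → x = 0
  nondeg1 : ∀ f, (∀ g, B1 f g = 0) → f = 0
  inv0 : ∀ x y z, B0 (S.br0 x y) z = B0 x (S.br0 y z)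
  inv1 : ∀ (x : g0) (f g : g1), B1 (S.br1 x f) g = B0 x (S.br11 f g)
  inv2 : ∀ (f g : g1) (x : g0), B0 (S.br11 f g) x = B1 f (S.br1 x g)

/-- A non-degenerate invariant supersymmetric *odd* bilinear form: it pairs `g0`
with `g1` (component `Bo`); like-parity pairings vanish by oddness, and
`B(f,f) = 0` for odd `f` is automatic. -/
structure OddNIS (S : SuperAlg K g0 g1) : Type where
  Bo : g0 →ₗ[K] g1 →ₗ[K] K
  nondeg0 : ∀ x, (∀ f, Bo x f = 0) → x = 0
  nondeg1 : ∀ f, (∀ x, Bo x f = 0) → f = 0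
  inv0 : ∀ (x y : g0) (f : g1), Bo (S.br0 x y) f = Bo x (S.br1 y f)
  inv1 : ∀ (x y : g0) (f : g1), Bo y (S.br1 x f) = Bo x (S.br1 y f)
  inv2 : ∀ f g h : g1, Bo (S.br11 f g) h = Bo (S.br11 g h) f

/-- An even derivation of a Lie superalgebra in characteristic 2. -/
structure EvenDer (S : SuperAlg K g0 g1) : Type where
  D0 : g0 →ₗ[K] g0
  D1 : g1 →ₗ[K] g1
  der0 : ∀ x y, D0 (S.br0 x y) = S.br0 (D0 x) y + S.br0 x (D0 y)
  der1 : ∀ x f, D1 (S.br1 x f) = S.br1 (D0 x) f + S.br1 x (D1 f)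
  der_sq : ∀ f, D0 (S.sq f) = S.br11 (D1 f) f

/-- An odd derivation of a Lie superalgebra in characteristic 2. -/
structure OddDer (S : SuperAlg K g0 g1) : Type where
  D0 : g0 →ₗ[K] g1
  D1 : g1 →ₗ[K] g0
  der0 : ∀ x y, D0 (S.br0 x y) = S.br1 x (D0 y) + S.br1 y (D0 x)
  der1 : ∀ x f, D1 (S.br1 x f) = S.br11 (D0 x) f + S.br0 x (D1 f)
  der_sq : ∀ f, D0 (S.sq f) = S.br1 (D1 f) f

/-- An isometry between Lie superalgebras endowed with even NIS forms: an even
linear bijection preserving brackets, squarings and the bilinear forms. -/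
structure EvenIsometry (S : SuperAlg K g0 g1) (N : EvenNIS K g0 g1 S)
    (S' : SuperAlg K h0 h1) (N' : EvenNIS K h0 h1 S') : Type where
  e0 : g0 ≃ₗ[K] h0
  e1 : g1 ≃ₗ[K] h1
  map_br0 : ∀ x y, e0 (S.br0 x y) = S'.br0 (e0 x) (e0 y)
  map_br1 : ∀ x f, e1 (S.br1 x f) = S'.br1 (e0 x) (e1 f)
  map_br11 : ∀ f g, e0 (S.br11 f g) = S'.br11 (e1 f) (e1 g)
  map_sq : ∀ f, e0 (S.sq f) = S'.sq (e1 f)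
  map_B0 : ∀ x y, N'.B0 (e0 x) (e0 y) = N.B0 x y
  map_B1 : ∀ f g, N'.B1 (e1 f) (e1 g) = N.B1 f g

/-- An isometry between Lie superalgebras endowed with odd NIS forms. -/
structure OddIsometry (S : SuperAlg K g0 g1) (N : OddNIS K g0 g1 S)
    (S' : SuperAlg K h0 h1) (N' : OddNIS K h0 h1 S') : Type where
  e0 : g0 ≃ₗ[K] h0
  e1 : g1 ≃ₗ[K] h1
  map_br0 : ∀ x y, e0 (S.br0 x y) = S'.br0 (e0 x) (e0 y)
  map_br1 : ∀ x f, e1 (S.br1 x f) = S'.br1 (e0 x) (e1 f)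
  map_br11 : ∀ f g, e0 (S.br11 f g) = S'.br11 (e1 f) (e1 g)
  map_sq : ∀ f, e0 (S.sq f) = S'.sq (e1 f)
  map_Bo : ∀ x f, N'.Bo (e0 x) (e1 f) = N.Bo x f

/-- A (graded) ideal of a Lie superalgebra in characteristic 2, given by its
even part `I0` and odd part `I1`. -/
def IsIdealPair (S : SuperAlg K g0 g1) (I0 : Submodule K g0) (I1 : Submodule K g1) : Prop :=
  (∀ x ∈ I0, ∀ y, S.br0 x y ∈ I0) ∧ (∀ x ∈ I0, ∀ f, S.br1 x f ∈ I1) ∧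
  (∀ f ∈ I1, ∀ x : g0, S.br1 x f ∈ I1) ∧ (∀ f ∈ I1, ∀ g, S.br11 f g ∈ I0) ∧
  (∀ f ∈ I1, S.sq f ∈ I0)

/-- Irreducibility of a NIS-Lie superalgebra with an even form: it is not the
direct sum of two nonzero mutually orthogonal ideals. -/
def EvenIrreducible (S : SuperAlg K g0 g1) (N : EvenNIS K g0 g1 S) : Prop :=
  ¬ ∃ (I0 J0 : Submodule K g0) (I1 J1 : Submodule K g1),
      IsIdealPair K g0 g1 S I0 I1 ∧ IsIdealPair K g0 g1 S J0 J1 ∧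
      (I0 ≠ ⊥ ∨ I1 ≠ ⊥) ∧ (J0 ≠ ⊥ ∨ J1 ≠ ⊥) ∧
      I0 ⊓ J0 = ⊥ ∧ I0 ⊔ J0 = ⊤ ∧ I1 ⊓ J1 = ⊥ ∧ I1 ⊔ J1 = ⊤ ∧
      (∀ x ∈ I0, ∀ y ∈ J0, N.B0 x y = 0) ∧ (∀ f ∈ I1, ∀ g ∈ J1, N.B1 f g = 0)

/-- Irreducibility of a NIS-Lie superalgebra with an odd form. -/
def OddIrreducible (S : SuperAlg K g0 g1) (N : OddNIS K g0 g1 S) : Prop :=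
  ¬ ∃ (I0 J0 : Submodule K g0) (I1 J1 : Submodule K g1),
      IsIdealPair K g0 g1 S I0 I1 ∧ IsIdealPair K g0 g1 S J0 J1 ∧
      (I0 ≠ ⊥ ∨ I1 ≠ ⊥) ∧ (J0 ≠ ⊥ ∨ J1 ≠ ⊥) ∧
      I0 ⊓ J0 = ⊥ ∧ I0 ⊔ J0 = ⊤ ∧ I1 ⊓ J1 = ⊥ ∧ I1 ⊔ J1 = ⊤ ∧
      (∀ x ∈ I0, ∀ g ∈ J1, N.Bo x g = 0) ∧ (∀ y ∈ J0, ∀ f ∈ I1, N.Bo y f = 0)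

/-- An ideal of a Lie superalgebra given as a pair of subsets (closed under the
vector space operations, brackets with arbitrary elements, and the squaring). -/
def IsIdealSet (S : SuperAlg K g0 g1) (I0 : Set g0) (I1 : Set g1) : Prop :=
  ((0 : g0) ∈ I0) ∧ (∀ x y, x ∈ I0 → y ∈ I0 → x + y ∈ I0) ∧
  (∀ (c : K) x, x ∈ I0 → c • x ∈ I0) ∧
  ((0 : g1) ∈ I1) ∧ (∀ f g, f ∈ I1 → g ∈ I1 → f + g ∈ I1) ∧
  (∀ (c : K) f, f ∈ I1 → c • f ∈ I1) ∧
  (∀ x ∈ I0, ∀ y, S.br0 x y ∈ I0) ∧ (∀ x ∈ I0, ∀ f, S.br1 x f ∈ I1) ∧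
  (∀ f ∈ I1, ∀ x : g0, S.br1 x f ∈ I1) ∧ (∀ f ∈ I1, ∀ g, S.br11 f g ∈ I0) ∧
  (∀ f ∈ I1, S.sq f ∈ I0)

/-- The even part of the center of a Lie superalgebra. -/
def zEven (S : SuperAlg K g0 g1) : Submodule K g0 :=
  (⨅ y : g0, LinearMap.ker (S.br0.flip y)) ⊓ (⨅ f : g1, LinearMap.ker (S.br1.flip f))

/-- The odd part of the center of a Lie superalgebra. -/
def zOdd (S : SuperAlg K g0 g1) : Submodule K g1 :=
  (⨅ x : g0, LinearMap.ker (S.br1 x)) ⊓ (⨅ g : g1, LinearMap.ker (S.br11.flip g))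

/-- The compatibility conditions between an even NIS `N`, an even derivation `D`
and a quadratic form `al` on the odd part, entering the `D_ev`-extension (even
form case): `B(Du,v)+B(u,Dv)=0`, `B(Du,u)=0` for even `u`, `al` is quadratic and
its polar form is `B(·,D·)`. -/
def DevDataEven (S : SuperAlg K g0 g1) (N : EvenNIS K g0 g1 S)
    (D : EvenDer K g0 g1 S) (al : g1 → K) : Prop :=
  (∀ x y : g0, N.B0 (D.D0 x) y + N.B0 x (D.D0 y) = 0) ∧
  (∀ f g : g1, N.B1 (D.D1 f) g + N.B1 f (D.D1 g) = 0) ∧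
  (∀ x : g0, N.B0 (D.D0 x) x = 0) ∧
  (∀ (c : K) (f : g1), al (c • f) = c * c * al f) ∧
  (∀ f g : g1, N.B1 f (D.D1 g) = al (f + g) - al f - al g)

/-- The structure constants of the `D_ev`-extension `g = Kx ⊕ a ⊕ Kx*` (even
form, even `x`, `x*`); an element of the even part is written `(r, u, s)` for
`r x + u + s x*`, and the constant `c` is the (arbitrary) value `B_g(x*,x*)`. -/
def DevExtEvenFormulas (S : SuperAlg K g0 g1) (N : EvenNIS K g0 g1 S)
    (D : EvenDer K g0 g1 S) (al : g1 → K) (c : K)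
    (T : SuperAlg K (K × g0 × K) g1) (M : EvenNIS K (K × g0 × K) g1 T) : Prop :=
  (∀ (r s r' s' : K) (u u' : g0),
      T.br0 (r, u, s) (r', u', s')
        = (N.B0 (D.D0 u) u', S.br0 u u' + s • D.D0 u' + s' • D.D0 u, 0)) ∧
  (∀ (r s : K) (u : g0) (f : g1), T.br1 (r, u, s) f = S.br1 u f + s • D.D1 f) ∧
  (∀ f : g1, T.sq f = (al f, S.sq f, 0)) ∧
  (∀ (r s r' s' : K) (u u' : g0),
      M.B0 (r, u, s) (r', u', s') = N.B0 u u' + r * s' + r' * s + c * (s * s')) ∧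
  (∀ f g : g1, M.B1 f g = N.B1 f g)

/-- The compatibility conditions between an even NIS `N`, an odd derivation `D`
and an even element `w = a₀`, entering the `D_od`-extension (even form case):
`B(Du,v) = B(u,Dv)`, `D² = ad_w`, `D(w) = 0`. -/
def DodDataEven (S : SuperAlg K g0 g1) (N : EvenNIS K g0 g1 S)
    (D : OddDer K g0 g1 S) (w : g0) : Prop :=
  (∀ (x : g0) (f : g1), N.B1 (D.D0 x) f = N.B0 x (D.D1 f)) ∧
  (∀ x : g0, D.D1 (D.D0 x) = S.br0 w x) ∧
  (∀ f : g1, D.D0 (D.D1 f) = S.br1 w f) ∧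
  D.D0 w = 0

/-- The structure constants of the `D_od`-extension `g = Kx ⊕ a ⊕ Kx*` (even
form, odd `x`, `x*`); an element of the odd part is written `(r, u, t)` for
`r x + u + t x*`. -/
def DodExtEvenFormulas (S : SuperAlg K g0 g1) (N : EvenNIS K g0 g1 S)
    (D : OddDer K g0 g1 S) (w : g0)
    (T : SuperAlg K g0 (K × g1 × K)) (M : EvenNIS K g0 (K × g1 × K) T) : Prop :=
  (∀ x y : g0, T.br0 x y = S.br0 x y) ∧
  (∀ (x : g0) (r t : K) (u : g1),
      T.br1 x (r, u, t) = (N.B1 (D.D0 x) u, S.br1 x u + t • D.D0 x, 0)) ∧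
  (∀ (r t : K) (u : g1), T.sq (r, u, t) = S.sq u + (t * t) • w + t • D.D1 u) ∧
  (∀ x y : g0, M.B0 x y = N.B0 x y) ∧
  (∀ (r t r' t' : K) (u u' : g1),
      M.B1 (r, u, t) (r', u', t') = N.B1 u u' + r * t' + r' * t)

/-- The compatibility conditions between an odd NIS `No`, an odd derivation `D`,
an even element `w = a₀` and a quadratic form `al`, entering the
`D_od`-extension (odd form case). -/
def DodDataOdd (S : SuperAlg K g0 g1) (No : OddNIS K g0 g1 S)
    (D : OddDer K g0 g1 S) (w : g0) (al : g1 → K) : Prop :=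
  (∀ x y : g0, No.Bo y (D.D0 x) + No.Bo x (D.D0 y) = 0) ∧
  (∀ f g : g1, No.Bo (D.D1 f) g + No.Bo (D.D1 g) f = 0) ∧
  (∀ x : g0, No.Bo x (D.D0 x) = 0) ∧
  (∀ x : g0, D.D1 (D.D0 x) = S.br0 w x) ∧
  (∀ f : g1, D.D0 (D.D1 f) = S.br1 w f) ∧
  D.D0 w = 0 ∧
  (∀ (c : K) (f : g1), al (c • f) = c * c * al f) ∧
  (∀ f g : g1, al (f + g) - al f - al g = No.Bo (D.D1 f) g)

/-- The structure constants of the `D_od`-extension `g = Kx ⊕ a ⊕ Ke` (odd form,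
even `x`, odd `e`); an even element is written `(r, u)` for `r x + u`, an odd
element `(v, μ)` for `v + μ e`. -/
def DodExtOddFormulas (S : SuperAlg K g0 g1) (No : OddNIS K g0 g1 S)
    (D : OddDer K g0 g1 S) (w : g0) (al : g1 → K) (m : K)
    (T : SuperAlg K (K × g0) (g1 × K)) (M : OddNIS K (K × g0) (g1 × K) T) : Prop :=
  (∀ (r r' : K) (x y : g0), T.br0 (r, x) (r', y) = (No.Bo y (D.D0 x), S.br0 x y)) ∧
  (∀ (r μ : K) (x : g0) (v : g1), T.br1 (r, x) (v, μ) = (S.br1 x v + μ • D.D0 x, 0)) ∧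
  (∀ (μ : K) (v : g1),
      T.sq (v, μ) = (μ * μ * m + al v, S.sq v + (μ * μ) • w + μ • D.D1 v)) ∧
  (∀ (r μ : K) (x : g0) (v : g1), M.Bo (r, x) (v, μ) = No.Bo x v + r * μ)

/-- The compatibility condition between an odd NIS `No` and an even derivation
`D`, entering the `D_ev`-extension (odd form case): `B(Du,v)+B(u,Dv)=0`. -/
def DevDataOdd (S : SuperAlg K g0 g1) (No : OddNIS K g0 g1 S)
    (D : EvenDer K g0 g1 S) : Prop :=
  ∀ (x : g0) (v : g1), No.Bo (D.D0 x) v + No.Bo x (D.D1 v) = 0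

/-- The structure constants of the `D_ev`-extension `g = Kx ⊕ a ⊕ Ke` (odd form,
odd `x`, even `e`); an even element is written `(u, ν)` for `u + ν e`, an odd
element `(μ, v)` for `μ x + v`. -/
def DevExtOddFormulas (S : SuperAlg K g0 g1) (No : OddNIS K g0 g1 S)
    (D : EvenDer K g0 g1 S)
    (T : SuperAlg K (g0 × K) (K × g1)) (M : OddNIS K (g0 × K) (K × g1) T) : Prop :=
  (∀ (ν ν' : K) (x y : g0),
      T.br0 (x, ν) (y, ν') = (S.br0 x y + ν • D.D0 y + ν' • D.D0 x, 0)) ∧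
  (∀ (ν μ : K) (x : g0) (v : g1),
      T.br1 (x, ν) (μ, v) = (No.Bo (D.D0 x) v, S.br1 x v + ν • D.D1 v)) ∧
  (∀ (μ : K) (v : g1), T.sq (μ, v) = (S.sq v, 0)) ∧
  (∀ (ν μ : K) (x : g0) (v : g1), M.Bo (x, ν) (μ, v) = No.Bo x v + ν * μ)

end Defs

end Char2DoubleExt

/-!
Let `s` be an even element of `a`. Measured from `ẽ + s` instead of `ẽ`, and with the
`x̃`-coordinate of an odd element `v` measured from `B_a(s, v)`, the extension by `D̃` obeys the
structure formulas of the extension by `D̃ + ad_s`. For `s = π₀(t)` the hypothesis says, in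
characteristic 2, that `D̃ + ad_s = λ π₀ D π₀⁻¹`, so what is left is to transport along `π₀` and to
rescale `x ↦ λ x̃`, `e ↦ λ⁻¹ ẽ`.
-/

namespace Char2DoubleExt

theorem add_eq_of_symm_apply_eq_add {R V W : Type*} [CommRing R] [CharP R 2]
    [AddCommGroup V] [Module R V] [AddCommGroup W] [Module R W]
    {e : V ≃ₗ[R] W} {w : W} {x y : V} (h : e.symm w = x + y) : w + e y = e x := by
  rw [LinearEquiv.symm_apply_eq, map_add] at h
  linear_combination (norm := module) h + (CharTwo.two_eq_zero : (2 : R) = 0) • e y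

section ProdShear

variable {R M M' N N' : Type*} [Semiring R]
  [AddCommMonoid M] [Module R M] [AddCommGroup M'] [Module R M']
  [AddCommMonoid N] [Module R N] [AddCommMonoid N'] [Module R N']

/-- The block upper triangular linear equivalence `(x, y) ↦ (e x + f y, e' y)`. This is
`LinearEquiv.skewProd` with the two factors interchanged. -/
def prodShear (e : M ≃ₗ[R] M') (e' : N ≃ₗ[R] N') (f : N →ₗ[R] M') : (M × N) ≃ₗ[R] (M' × N') :=
  LinearEquiv.prodComm R M N ≪≫ₗ e'.skewProd e f ≪≫ₗ LinearEquiv.prodComm R N' M'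

theorem prodShear_apply (e : M ≃ₗ[R] M') (e' : N ≃ₗ[R] N') (f : N →ₗ[R] M') (x : M) (y : N) :
    prodShear e e' f (x, y) = (e x + f y, e' y) :=
  rfl

end ProdShear

section Extension

variable {K : Type} [Field K] {g0 g1 h0 h1 : Type}
  [AddCommGroup g0] [Module K g0] [AddCommGroup g1] [Module K g1]
  [AddCommGroup h0] [Module K h0] [AddCommGroup h1] [Module K h1]
  {S : SuperAlg K g0 g1} {N : OddNIS K g0 g1 S} {D : EvenDer K g0 g1 S}
  {T : SuperAlg K (g0 × K) (K × g1)} {M : OddNIS K (g0 × K) (K × g1) T}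
  {S' : SuperAlg K h0 h1} {N' : OddNIS K h0 h1 S'} {D' : EvenDer K h0 h1 S'}
  {T' : SuperAlg K (h0 × K) (K × h1)} {M' : OddNIS K (h0 × K) (K × h1) T'}

namespace SuperAlg

theorem br0_comm [CharP K 2] (S : SuperAlg K g0 g1) (x y : g0) : S.br0 x y = S.br0 y x := by
  have polarized : S.br0 x y + S.br0 y x = 0 := by
    simpa only [map_add, LinearMap.add_apply, S.br0_self, zero_add, add_zero, add_comm]
      using S.br0_self (x + y)
  linear_combination (norm := module)
    polarized - (CharTwo.two_eq_zero : (2 : K) = 0) • S.br0 y x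

theorem map_br11_of_map_sq {e0 : g0 →ₗ[K] h0} {e1 : g1 →ₗ[K] h1}
    (h : ∀ f, e0 (S.sq f) = S'.sq (e1 f)) (f g : g1) :
    e0 (S.br11 f g) = S'.br11 (e1 f) (e1 g) := by
  have hfg := h (f + g)
  rw [S.sq_add, map_add e1, S'.sq_add, map_add, map_add, h, h] at hfg
  exact add_left_cancel hfg

end SuperAlg

namespace DevExtOddFormulas

theorem br0_apply (hT : DevExtOddFormulas K g0 g1 S N D T M) (x y : g0) (α β : K) :
    T.br0 (x, α) (y, β) = (S.br0 x y + α • D.D0 y + β • D.D0 x, 0) :=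
  hT.1 α β x y

theorem br1_apply (hT : DevExtOddFormulas K g0 g1 S N D T M) (x : g0) (v : g1) (α μ : K) :
    T.br1 (x, α) (μ, v) = (N.Bo (D.D0 x) v, S.br1 x v + α • D.D1 v) :=
  hT.2.1 α μ x v

theorem sq_apply (hT : DevExtOddFormulas K g0 g1 S N D T M) (v : g1) (μ : K) :
    T.sq (μ, v) = (S.sq v, 0) :=
  hT.2.2.1 μ v

theorem Bo_apply (hT : DevExtOddFormulas K g0 g1 S N D T M) (x : g0) (v : g1) (α μ : K) :
    M.Bo (x, α) (μ, v) = N.Bo x v + α * μ :=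
  hT.2.2.2 α μ x v

theorem br0_shift [CharP K 2] (hT : DevExtOddFormulas K g0 g1 S N D T M)
    (s x y : g0) (α β : K) :
    T.br0 (x + α • s, α) (y + β • s, β) =
      (S.br0 x y + α • (D.D0 y + S.br0 s y) + β • (D.D0 x + S.br0 s x), 0) := by
  rw [hT.br0_apply]
  ext
  · simp only [map_add, map_smul, LinearMap.add_apply, LinearMap.smul_apply, S.br0_self,
      S.br0_comm x s, smul_zero, add_zero]
    linear_combination (norm := module) (CharTwo.two_eq_zero : (2 : K) = 0) • ((α * β) • D.D0 s)
  · rfl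

theorem br1_shift [CharP K 2] (hT : DevExtOddFormulas K g0 g1 S N D T M)
    (hD : DevDataOdd K g0 g1 S N D) (s x : g0) (v : g1) (α μ : K) :
    T.br1 (x + α • s, α) (μ, v) =
      (N.Bo (D.D0 x + S.br0 s x) v + N.Bo s (S.br1 x v + α • (D.D1 v + S.br1 s v)),
        S.br1 x v + α • (D.D1 v + S.br1 s v)) := by
  have two_eq_zero : (2 : K) = 0 := CharTwo.two_eq_zero
  have self_act_eq_zero : N.Bo s (S.br1 s v) = 0 := by
    rw [← N.inv0, S.br0_self, map_zero, LinearMap.zero_apply]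
  rw [hT.br1_apply]
  ext
  · simp only [map_add, map_smul, LinearMap.add_apply, LinearMap.smul_apply, smul_eq_mul,
      N.inv0, self_act_eq_zero]
    linear_combination α * hD s v - (N.Bo s (S.br1 x v) + α * N.Bo s (D.D1 v)) * two_eq_zero
  · simp only [map_add, map_smul, LinearMap.add_apply, LinearMap.smul_apply]
    module

theorem Bo_shift [CharP K 2] (hT : DevExtOddFormulas K g0 g1 S N D T M)
    (s x : g0) (v : g1) (α μ : K) :
    M.Bo (x + α • s, α) (μ + N.Bo s v, v) = N.Bo x v + α * μ := by
  rw [hT.Bo_apply]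
  simp only [map_add, map_smul, LinearMap.add_apply, LinearMap.smul_apply, smul_eq_mul]
  linear_combination α * N.Bo s v * (CharTwo.two_eq_zero : (2 : K) = 0)

end DevExtOddFormulas

namespace OddIsometry

variable (p : OddIsometry K g0 g1 h0 h1 S N S' N') {c : K} (hc : c ≠ 0) (s : h0)

/-- The even component of the map between `D_ev`-extensions which extends the isometry `p` of the
algebras being extended and sends `e` to `c⁻¹ (e' + s)`. -/
def devExtEven : (g0 × K) ≃ₗ[K] (h0 × K) :=
  prodShear p.e0 (LinearEquiv.smulOfNeZero K K c⁻¹ (inv_ne_zero hc))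
    (LinearMap.toSpanSingleton K h0 (c⁻¹ • s))

/-- The odd component of the same map: `x` goes to `c x'`, and an odd `v` to
`p v + B(s, p v) x'`. -/
def devExtOdd : (K × g1) ≃ₗ[K] (K × h1) :=
  prodShear (LinearEquiv.smulOfNeZero K K c hc) p.e1 (N'.Bo s ∘ₗ p.e1.toLinearMap)

theorem devExtEven_apply (u : g0) (ν : K) :
    p.devExtEven hc s (u, ν) = (p.e0 u + (c⁻¹ * ν) • s, c⁻¹ * ν) := by
  rw [devExtEven, prodShear_apply, LinearMap.toSpanSingleton_apply, smul_smul, mul_comm ν]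
  rfl

theorem devExtOdd_apply (μ : K) (v : g1) :
    p.devExtOdd hc s (μ, v) = (c * μ + N'.Bo s (p.e1 v), p.e1 v) :=
  rfl

variable {p s}

theorem devExtEven_br0 [CharP K 2] (hT : DevExtOddFormulas K g0 g1 S N D T M)
    (hT' : DevExtOddFormulas K h0 h1 S' N' D' T' M')
    (hp0 : ∀ u, D'.D0 (p.e0 u) + S'.br0 s (p.e0 u) = c • p.e0 (D.D0 u)) (z w : g0 × K) :
    p.devExtEven hc s (T.br0 z w) =
      T'.br0 (p.devExtEven hc s z) (p.devExtEven hc s w) := by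
  obtain ⟨x, ν⟩ := z
  obtain ⟨y, ν'⟩ := w
  have cancel (a : K) : c⁻¹ * a * c = a := by field_simp
  simp only [hT.br0_apply, devExtEven_apply, hT'.br0_shift, hp0, smul_smul, cancel, map_add,
    map_smul, p.map_br0, mul_zero, zero_smul, add_zero]

theorem devExtOdd_br1 [CharP K 2] (hT : DevExtOddFormulas K g0 g1 S N D T M)
    (hT' : DevExtOddFormulas K h0 h1 S' N' D' T' M') (hD' : DevDataOdd K h0 h1 S' N' D')
    (hp0 : ∀ u, D'.D0 (p.e0 u) + S'.br0 s (p.e0 u) = c • p.e0 (D.D0 u))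
    (hp1 : ∀ f, D'.D1 (p.e1 f) + S'.br1 s (p.e1 f) = c • p.e1 (D.D1 f))
    (z : g0 × K) (w : K × g1) :
    p.devExtOdd hc s (T.br1 z w) = T'.br1 (p.devExtEven hc s z) (p.devExtOdd hc s w) := by
  obtain ⟨x, ν⟩ := z
  obtain ⟨μ, v⟩ := w
  have cancel : c⁻¹ * ν * c = ν := by field_simp
  simp only [hT.br1_apply, devExtEven_apply, devExtOdd_apply, hT'.br1_shift hD', hp0, hp1,
    smul_smul, cancel, map_add, map_smul, LinearMap.smul_apply, smul_eq_mul, p.map_br1, p.map_Bo]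

theorem devExtEven_sq (hT : DevExtOddFormulas K g0 g1 S N D T M)
    (hT' : DevExtOddFormulas K h0 h1 S' N' D' T' M') (w : K × g1) :
    p.devExtEven hc s (T.sq w) = T'.sq (p.devExtOdd hc s w) := by
  obtain ⟨μ, v⟩ := w
  simp only [hT.sq_apply, hT'.sq_apply, devExtEven_apply, devExtOdd_apply, p.map_sq, mul_zero,
    zero_smul, add_zero]

theorem Bo_devExtEven_devExtOdd [CharP K 2] (hT : DevExtOddFormulas K g0 g1 S N D T M)
    (hT' : DevExtOddFormulas K h0 h1 S' N' D' T' M') (z : g0 × K) (w : K × g1) :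
    M'.Bo (p.devExtEven hc s z) (p.devExtOdd hc s w) = M.Bo z w := by
  obtain ⟨x, ν⟩ := z
  obtain ⟨μ, v⟩ := w
  have cancel : c⁻¹ * ν * (c * μ) = ν * μ := by field_simp
  rw [devExtEven_apply, devExtOdd_apply, hT'.Bo_shift, hT.Bo_apply, p.map_Bo, cancel]

/-- The isometry of `D_ev`-extensions with components `devExtEven` and `devExtOdd`, available as
soon as `p` intertwines `c D` with `D' + ad_s`. -/
def devExt [CharP K 2] (hc : c ≠ 0) (hT : DevExtOddFormulas K g0 g1 S N D T M)
    (hT' : DevExtOddFormulas K h0 h1 S' N' D' T' M') (hD' : DevDataOdd K h0 h1 S' N' D')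
    (hp0 : ∀ u, D'.D0 (p.e0 u) + S'.br0 s (p.e0 u) = c • p.e0 (D.D0 u))
    (hp1 : ∀ f, D'.D1 (p.e1 f) + S'.br1 s (p.e1 f) = c • p.e1 (D.D1 f)) :
    OddIsometry K (g0 × K) (K × g1) (h0 × K) (K × h1) T M T' M' where
  e0 := p.devExtEven hc s
  e1 := p.devExtOdd hc s
  map_br0 := devExtEven_br0 hc hT hT' hp0
  map_br1 := devExtOdd_br1 hc hT hT' hD' hp0 hp1
  map_br11 := SuperAlg.map_br11_of_map_sq (e0 := (p.devExtEven hc s).toLinearMap)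
    (e1 := (p.devExtOdd hc s).toLinearMap) (devExtEven_sq hc hT hT')
  map_sq := devExtEven_sq hc hT hT'
  map_Bo := Bo_devExtEven_devExtOdd hc hT hT'

end OddIsometry

end Extension

theorem stmt15_general (K : Type) [Field K] [CharP K 2] (a0 a1 b0 b1 : Type)
    [AddCommGroup a0] [Module K a0] [AddCommGroup a1] [Module K a1]
    [AddCommGroup b0] [Module K b0] [AddCommGroup b1] [Module K b1]
    (S : SuperAlg K a0 a1) (No : OddNIS K a0 a1 S) (D : EvenDer K a0 a1 S)
    (St : SuperAlg K b0 b1) (Nt : OddNIS K b0 b1 St) (Dt : EvenDer K b0 b1 St)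
    (hdatat : DevDataOdd K b0 b1 St Nt Dt)
    (T : SuperAlg K (a0 × K) (K × a1)) (M : OddNIS K (a0 × K) (K × a1) T)
    (hT : DevExtOddFormulas K a0 a1 S No D T M)
    (Tt : SuperAlg K (b0 × K) (K × b1)) (Mt : OddNIS K (b0 × K) (K × b1) Tt)
    (hTt : DevExtOddFormulas K b0 b1 St Nt Dt Tt Mt)
    (p0 : OddIsometry K a0 a1 b0 b1 S No St Nt)
    (lam : K) (hlam : lam ≠ 0) (t : a0)
    (hrel0 : ∀ u : a0, p0.e0.symm (Dt.D0 (p0.e0 u)) = lam • D.D0 u + S.br0 t u)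
    (hrel1 : ∀ f : a1, p0.e1.symm (Dt.D1 (p0.e1 f)) = lam • D.D1 f + S.br1 t f) :
    ∃ π : OddIsometry K (a0 × K) (K × a1) (b0 × K) (K × b1) T M Tt Mt,
      (∀ (u : a0) (ν : K),
        π.e0 (u, ν) = (p0.e0 u + (lam⁻¹ * ν) • p0.e0 t, lam⁻¹ * ν)) ∧
      (∀ (μ : K) (v : a1), π.e1 (μ, v) = (lam * μ + No.Bo t v, p0.e1 v)) ∧
      (∀ u : a0, ∃ u' : b0, π.e0 (u, 0) = (u', 0)) := by
  have intertwines0 (u : a0) :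
      Dt.D0 (p0.e0 u) + St.br0 (p0.e0 t) (p0.e0 u) = lam • p0.e0 (D.D0 u) := by
    rw [← p0.map_br0, ← map_smul, add_eq_of_symm_apply_eq_add (hrel0 u)]
  have intertwines1 (f : a1) :
      Dt.D1 (p0.e1 f) + St.br1 (p0.e0 t) (p0.e1 f) = lam • p0.e1 (D.D1 f) := by
    rw [← p0.map_br1, ← map_smul, add_eq_of_symm_apply_eq_add (hrel1 f)]
  refine ⟨OddIsometry.devExt hlam hT hTt hdatat intertwines0 intertwines1,
    p0.devExtEven_apply hlam (p0.e0 t), fun μ v ↦ ?_, fun u ↦ ⟨p0.e0 u, ?_⟩⟩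
  · exact (p0.devExtOdd_apply hlam (p0.e0 t) μ v).trans (by rw [p0.map_Bo])
  · exact (p0.devExtEven_apply hlam (p0.e0 t) u 0).trans
      (by rw [mul_zero, zero_smul, add_zero])

/-- Theorem 4.11 of the paper: let `(g, B_g)` and
`(g̃, B_g̃)` be `D_ev`-extensions (odd form, odd `x`, even `e`) of the same
NIS-Lie superalgebra `(a, B_a)` by even derivations `D` and `D̃`. Given an
isometry `π₀` of `(a, B_a)`, a nonzero `λ ∈ K` and `t ∈ a_0` with
`π₀⁻¹ ∘ D̃ ∘ π₀ = λD + ad_t` on `a`, the prescribed map `π` is an adapted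
isometry `g → g̃`. -/
theorem stmt15 (K : Type) [Field K] [CharP K 2] (a0 a1 : Type)
    [AddCommGroup a0] [Module K a0] [AddCommGroup a1] [Module K a1]
    [FiniteDimensional K a0] [FiniteDimensional K a1]
    (S : SuperAlg K a0 a1) (No : OddNIS K a0 a1 S)
    (D Dt : EvenDer K a0 a1 S)
    (hdata : DevDataOdd K a0 a1 S No D)
    (hdatat : DevDataOdd K a0 a1 S No Dt)
    (T : SuperAlg K (a0 × K) (K × a1)) (M : OddNIS K (a0 × K) (K × a1) T)
    (hT : DevExtOddFormulas K a0 a1 S No D T M)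
    (Tt : SuperAlg K (a0 × K) (K × a1)) (Mt : OddNIS K (a0 × K) (K × a1) Tt)
    (hTt : DevExtOddFormulas K a0 a1 S No Dt Tt Mt)
    (p0 : OddIsometry K a0 a1 a0 a1 S No S No)
    (lam : K) (hlam : lam ≠ 0) (t : a0)
    (hrel0 : ∀ u : a0, p0.e0.symm (Dt.D0 (p0.e0 u)) = lam • D.D0 u + S.br0 t u)
    (hrel1 : ∀ f : a1, p0.e1.symm (Dt.D1 (p0.e1 f)) = lam • D.D1 f + S.br1 t f) :
    ∃ π : OddIsometry K (a0 × K) (K × a1) (a0 × K) (K × a1) T M Tt Mt,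
      (∀ (u : a0) (ν : K),
        π.e0 (u, ν) = (p0.e0 u + (lam⁻¹ * ν) • p0.e0 t, lam⁻¹ * ν)) ∧
      (∀ (μ : K) (v : a1), π.e1 (μ, v) = (lam * μ + No.Bo t v, p0.e1 v)) ∧
      -- adaptedness: `π(Kx ⊕ a) = Kx̃ ⊕ a`
      (∀ u : a0, ∃ u' : a0, π.e0 (u, 0) = (u', 0)) :=
  stmt15_general K a0 a1 a0 a1 S No D S No Dt hdatat T M hT Tt Mt hTt p0 lam hlam t hrel0 hrel1

end Char2DoubleExt
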